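/- A smooth cubic form f in four variables over 𝔽₂ has a subgroup isomorphic to S₆ contained in its stabilizer {g ∈ GL₄(𝔽₂) : f ∘ g = f} if and only if f vanishes at every point of 𝔽₂⁴ (i.e., the cubic surface f = 0 passes through all 15 points of ℙ³(𝔽₂)). -/

import Mathlib

open MvPolynomial

noncomputable section

/-- The field with two elements. -/
abbrev F2 : Type := ZMod 2

/-- An algebraic closure of `F2`. -/
abbrev Kbar : Type := AlgebraicClosure F2

/-- Linear substitution action of a matrix `g` on a polynomial `f`:
`(act g f)(x) = f (g * x)`, i.e. the variable `X i` is replaced by `∑ j, g i j • X j`. -/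
def act (g : Matrix (Fin 4) (Fin 4) F2) (f : MvPolynomial (Fin 4) F2) :
    MvPolynomial (Fin 4) F2 :=
  aeval (fun i => ∑ j, g i j • X j) f

lemma act_one (f : MvPolynomial (Fin 4) F2) : act 1 f = f := by
  have h : (fun i => ∑ j, (1 : Matrix (Fin 4) (Fin 4) F2) i j • (X j : MvPolynomial (Fin 4) F2))
      = X := by
    funext i
    simp [Matrix.one_apply, ite_smul]
  simp [act, h]

lemma act_act (g h : Matrix (Fin 4) (Fin 4) F2) (f : MvPolynomial (Fin 4) F2) :
    act g (act h f) = act (h * g) f := by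
  show (aeval _) ((aeval _) f) = _
  rw [← AlgHom.comp_apply, comp_aeval]
  have key : (fun i => (aeval fun i => ∑ j, g i j • (X j : MvPolynomial (Fin 4) F2))
        (∑ j, h i j • (X j : MvPolynomial (Fin 4) F2)))
      = fun i => ∑ j, (h * g) i j • (X j : MvPolynomial (Fin 4) F2) := by
    funext i
    simp only [map_sum, map_smul, aeval_X, Matrix.mul_apply, Finset.smul_sum, smul_smul,
      Finset.sum_smul]
    rw [Finset.sum_comm]
  rw [key]
  rfl

/-- The stabilizer of a polynomial `f` under the linear-substitution action of `GL₄(𝔽₂)`. -/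
def stab (f : MvPolynomial (Fin 4) F2) : Subgroup (GL (Fin 4) F2) where
  carrier := {g | act (g : Matrix (Fin 4) (Fin 4) F2) f = f}
  one_mem' := by simpa using act_one f
  mul_mem' := by
    intro a b ha hb
    simp only [Set.mem_setOf_eq] at *
    have : act ((↑(a * b) : Matrix (Fin 4) (Fin 4) F2)) f = act ↑b (act ↑a f) := by
      rw [act_act]; rfl
    rw [this, ha, hb]
  inv_mem' := by
    intro a ha
    simp only [Set.mem_setOf_eq] at *
    have h2 := congrArg (act ((↑(a⁻¹) : Matrix (Fin 4) (Fin 4) F2))) ha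
    rw [act_act] at h2
    rw [Units.mul_inv, act_one] at h2
    exact h2.symm

/-- A smooth cubic form over `𝔽₂`: homogeneous of degree `3`, such that over an algebraic
closure the only common zero of `f` and its four partial derivatives is the origin. -/
def IsSmoothCubic (f : MvPolynomial (Fin 4) F2) : Prop :=
  f.IsHomogeneous 3 ∧
    ∀ v : Fin 4 → Kbar,
      eval v (map (algebraMap F2 Kbar) f) = 0 →
      (∀ i : Fin 4, eval v (map (algebraMap F2 Kbar) (pderiv i f)) = 0) →
      v = 0

/-- The cubic form `x²t + y²z + yz² + xt²`. -/
def c0 : MvPolynomial (Fin 4) F2 :=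
  X 0 ^ 2 * X 3 + X 1 ^ 2 * X 2 + X 1 * X 2 ^ 2 + X 0 * X 3 ^ 2


/-! ### Transitivity of an `S₆` inside `GL₄(𝔽₂)` on nonzero vectors -/

/-- A five-cycle in `S₆`. -/
def cyc5 : Equiv.Perm (Fin 6) :=
  Equiv.swap 0 1 * Equiv.swap 1 2 * Equiv.swap 2 3 * Equiv.swap 3 4

lemma cyc5_pow : cyc5 ^ 5 = 1 := by unfold cyc5; decide +kernel

lemma cyc5_ne : cyc5 ≠ 1 := by unfold cyc5; decide +kernel

lemma cyc5_mem : cyc5 ∈ alternatingGroup (Fin 6) := by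
  rw [Equiv.Perm.mem_alternatingGroup]; unfold cyc5; decide +kernel

lemma cyc5_isPGroup : IsPGroup 5 (Subgroup.zpowers cyc5) := by
  haveI : Fact (Nat.Prime 5) := ⟨by norm_num⟩
  apply IsPGroup.of_card (n := 1)
  rw [Nat.card_zpowers, orderOf_eq_prime cyc5_pow cyc5_ne, pow_one]

/-- A vector fixed by the five-cycle is zero, for a faithful action on a group of order 16. -/
lemma fixed_eq_zero {V : Type} [AddCommGroup V] [Finite V] (hV : Nat.card V = 16)
    [DistribMulAction (Equiv.Perm (Fin 6)) V] [FaithfulSMul (Equiv.Perm (Fin 6)) V]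
    (v : V) (hv : cyc5 • v = v) : v = 0 := by
  haveI : Fact (Nat.Prime 5) := ⟨by norm_num⟩
  have h1 := cyc5_isPGroup.card_modEq_card_fixedPoints V
  let S : AddSubgroup V :=
    { carrier := {w | cyc5 • w = w}
      add_mem' := by
        intro a b ha hb
        simp only [Set.mem_setOf_eq] at *
        rw [smul_add, ha, hb]
      zero_mem' := by simp
      neg_mem' := by
        intro a ha
        simp only [Set.mem_setOf_eq] at *
        rw [smul_neg, ha] }
  have h2 : MulAction.fixedPoints (Subgroup.zpowers cyc5) V = (S : Set V) := by
    ext w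
    constructor
    · intro h
      exact h ⟨cyc5, Subgroup.mem_zpowers _⟩
    · rintro h ⟨g, hg⟩
      have h3 : cyc5 ∈ MulAction.stabilizer (Equiv.Perm (Fin 6)) w := h
      have h4 : Subgroup.zpowers cyc5 ≤ MulAction.stabilizer (Equiv.Perm (Fin 6)) w := by
        rwa [Subgroup.zpowers_le]
      exact h4 hg
  have h3 : Nat.card S ∣ 16 := hV ▸ AddSubgroup.card_addSubgroup_dvd_card S
  have h5 : Nat.card S = 1 ∨ Nat.card S = 16 := by
    rw [h2, hV] at h1
    change 16 ≡ Nat.card S [MOD 5] at h1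
    have h6 : Nat.card S ≤ 16 := Nat.le_of_dvd (by norm_num) h3
    generalize Nat.card S = n at *
    interval_cases n <;> simp_all [Nat.ModEq]
  rcases h5 with h5 | h5
  · have h6 : S = ⊥ := AddSubgroup.card_eq_one.mp h5
    have h7 : v ∈ S := hv
    rwa [h6, AddSubgroup.mem_bot] at h7
  · exfalso
    have h6 : S = ⊤ := AddSubgroup.eq_top_of_card_eq S (by rw [h5, hV])
    apply cyc5_ne
    apply FaithfulSMul.eq_of_smul_eq_smul (α := V)
    intro w
    have h7 : w ∈ S := by rw [h6]; trivial
    rw [one_smul]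
    exact h7

lemma orbit_card {V : Type} [AddCommGroup V] [Finite V] (hV : Nat.card V = 16)
    [DistribMulAction (Equiv.Perm (Fin 6)) V] [FaithfulSMul (Equiv.Perm (Fin 6)) V]
    (v : V) (hv : v ≠ 0) : 10 ≤ Nat.card (MulAction.orbit (Equiv.Perm (Fin 6)) v) := by
  haveI : Fact (Nat.Prime 5) := ⟨by norm_num⟩
  set O := MulAction.orbit (Equiv.Perm (Fin 6)) v with hO
  have hne : ∀ w : O, (w : V) ≠ 0 := by
    rintro ⟨w, g, rfl⟩
    change g • v ≠ 0
    rw [Ne, smul_eq_zero_iff_eq]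
    exact hv
  have h0 : ∀ w : O, cyc5 • w ≠ w := by
    intro w hw
    apply hne w
    apply fixed_eq_zero hV
    exact congrArg Subtype.val hw
  have h1 := cyc5_isPGroup.card_modEq_card_fixedPoints O
  have h2 : MulAction.fixedPoints (Subgroup.zpowers cyc5) O = ∅ := by
    ext w
    simp only [Set.mem_empty_iff_false, iff_false]
    intro h
    exact h0 w (h ⟨cyc5, Subgroup.mem_zpowers _⟩)
  have h3 : 5 ∣ Nat.card O := by
    rw [h2] at h1
    apply (Nat.modEq_zero_iff_dvd).mp
    simpa using h1
  have h4 : 0 < Nat.card O := by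
    haveI : Nonempty O := ⟨⟨v, MulAction.mem_orbit_self v⟩⟩
    exact Nat.card_pos
  by_contra hlt
  have h5 : Nat.card O = 5 := by omega
  let φ := MulAction.toPermHom (Equiv.Perm (Fin 6)) O
  have h6 : Nontrivial φ.ker := by
    rw [Subgroup.nontrivial_iff_ne_bot]
    intro h
    have hinj := (MonoidHom.ker_eq_bot_iff φ).mp h
    have := Nat.card_le_card_of_injective φ hinj
    rw [Nat.card_perm, Nat.card_perm, h5] at this
    simp [Nat.factorial] at this
  have h7 : alternatingGroup (Fin 6) ≤ φ.ker :=
    Equiv.Perm.alternatingGroup_le_of_normal (by simp) h6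
  have h8 : φ cyc5 = 1 := h7 cyc5_mem
  apply h0 ⟨v, MulAction.mem_orbit_self v⟩
  exact congrArg (fun p : Equiv.Perm O => p ⟨v, MulAction.mem_orbit_self v⟩) h8

lemma exists_smul {V : Type} [AddCommGroup V] [Finite V] (hV : Nat.card V = 16)
    [DistribMulAction (Equiv.Perm (Fin 6)) V] [FaithfulSMul (Equiv.Perm (Fin 6)) V]
    (v w : V) (hv : v ≠ 0) (hw : w ≠ 0) : ∃ g : Equiv.Perm (Fin 6), g • v = w := by
  by_contra hcon
  have hd : Disjoint (MulAction.orbit (Equiv.Perm (Fin 6)) v)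
      (MulAction.orbit (Equiv.Perm (Fin 6)) w) := by
    rcases MulAction.orbit.eq_or_disjoint (G := Equiv.Perm (Fin 6)) v w with h | h
    · exfalso
      apply hcon
      have : w ∈ MulAction.orbit (Equiv.Perm (Fin 6)) v := h ▸ MulAction.mem_orbit_self w
      exact this
    · exact h
  have h1 := orbit_card hV v hv
  have h2 := orbit_card hV w hw
  have h3 := Set.ncard_union_eq hd
  have h4 := Set.ncard_le_card (MulAction.orbit (Equiv.Perm (Fin 6)) v ∪
      MulAction.orbit (Equiv.Perm (Fin 6)) w)
  rw [Nat.card_coe_set_eq] at h1 h2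
  omega

lemma eval_act (g : Matrix (Fin 4) (Fin 4) F2) (f : MvPolynomial (Fin 4) F2) (v : Fin 4 → F2) :
    eval v (act g f) = eval (g.mulVec v) f := by
  have h : ∀ (w : Fin 4 → F2) (p : MvPolynomial (Fin 4) F2), eval w p = aeval w p := by
    intro w p; rw [aeval_eq_eval]
  rw [h, h, act, ← AlgHom.comp_apply, comp_aeval]
  congr 2
  funext i
  simp [Matrix.mulVec, dotProduct]

lemma forward (f : MvPolynomial (Fin 4) F2) (hf : f.IsHomogeneous 3)
    (H : Subgroup (GL (Fin 4) F2)) (hH : H ≤ stab f) (φ : H ≃* Equiv.Perm (Fin 6)) :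
    ∀ v : Fin 4 → F2, eval v f = 0 := by
  letI : DistribMulAction (Equiv.Perm (Fin 6)) (Fin 4 → F2) :=
    { smul := fun s v => ((φ.symm s : GL (Fin 4) F2) : Matrix (Fin 4) (Fin 4) F2).mulVec v
      one_smul := fun v => by
        change ((φ.symm 1 : GL (Fin 4) F2) : Matrix (Fin 4) (Fin 4) F2).mulVec v = v
        simp
      mul_smul := fun s t v => by
        change ((φ.symm (s * t) : GL (Fin 4) F2) : Matrix (Fin 4) (Fin 4) F2).mulVec v =
          ((φ.symm s : GL (Fin 4) F2) : Matrix (Fin 4) (Fin 4) F2).mulVec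
          (((φ.symm t : GL (Fin 4) F2) : Matrix (Fin 4) (Fin 4) F2).mulVec v)
        simp
      smul_zero := fun s => Matrix.mulVec_zero _
      smul_add := fun s v w => Matrix.mulVec_add _ v w }
  have hs : ∀ (s : Equiv.Perm (Fin 6)) (v : Fin 4 → F2),
    s • v = ((φ.symm s : GL (Fin 4) F2) : Matrix (Fin 4) (Fin 4) F2).mulVec v := fun _ _ => rfl
  haveI : FaithfulSMul (Equiv.Perm (Fin 6)) (Fin 4 → F2) := ⟨by
    intro s t h
    apply φ.symm.injective
    apply Subtype.ext
    apply Units.ext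
    apply Matrix.toLin'.injective
    apply LinearMap.ext
    intro v
    exact h v⟩
  have hV : Nat.card (Fin 4 → F2) = 16 := by simp
  have hinv : ∀ (s : Equiv.Perm (Fin 6)) (v : Fin 4 → F2), eval (s • v) f = eval v f := by
    intro s v
    rw [hs, ← eval_act]
    congr 1
    exact hH (φ.symm s).2
  have h0 : eval (0 : Fin 4 → F2) f = 0 := by
    rw [eval_zero, constantCoeff_eq]
    exact hf.coeff_eq_zero (by simp)
  have hsum : ∑ v : Fin 4 → F2, eval v f = 0 := by
    apply MvPolynomial.sum_eval_eq_zero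
    have := hf.totalDegree_le
    simp
    omega
  let e : Fin 4 → F2 := fun _ => 1
  have he : e ≠ 0 := by decide
  have hc : ∀ v : Fin 4 → F2, v ≠ 0 → eval v f = eval e f := by
    intro v hv
    obtain ⟨s, rfl⟩ := exists_smul hV e v he hv
    exact hinv s e
  have hce : eval e f = 0 := by
    rw [← Finset.add_sum_erase _ _ (Finset.mem_univ (0 : Fin 4 → F2)), h0,
      Finset.sum_congr rfl (fun v hv => hc v (Finset.ne_of_mem_erase hv)),
      Finset.sum_const, Finset.card_erase_of_mem (Finset.mem_univ _)] at hsum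
    have h15 : (Finset.univ : Finset (Fin 4 → F2)).card - 1 = 15 := by simp
    rw [h15, zero_add, nsmul_eq_mul] at hsum
    have : ((15 : ℕ) : F2) = 1 := by decide
    rwa [this, one_mul] at hsum
  intro v
  by_cases hv : v = 0
  · rw [hv, h0]
  · rw [hc v hv, hce]

/-! ### The form attached to a matrix -/

/-- The cubic form `∑ A i j x_i x_j²`. -/
def Q (A : Matrix (Fin 4) (Fin 4) F2) : MvPolynomial (Fin 4) F2 :=
  ∑ i, ∑ j, A i j • (X i * X j ^ 2)

lemma sum4_comm {M : Type} [AddCommMonoid M] (F : Fin 4 → Fin 4 → Fin 4 → Fin 4 → M) :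
    ∑ i, ∑ j, ∑ k, ∑ l, F i j k l = ∑ k, ∑ l, ∑ j, ∑ i, F i j k l := by
  calc ∑ i, ∑ j, ∑ k, ∑ l, F i j k l = ∑ i, ∑ k, ∑ j, ∑ l, F i j k l :=
        Finset.sum_congr rfl fun i _ => Finset.sum_comm
    _ = ∑ k, ∑ i, ∑ j, ∑ l, F i j k l := Finset.sum_comm
    _ = ∑ k, ∑ i, ∑ l, ∑ j, F i j k l :=
        Finset.sum_congr rfl fun k _ => Finset.sum_congr rfl fun i _ => Finset.sum_comm
    _ = ∑ k, ∑ l, ∑ i, ∑ j, F i j k l := Finset.sum_congr rfl fun k _ => Finset.sum_comm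
    _ = ∑ k, ∑ l, ∑ j, ∑ i, F i j k l :=
        Finset.sum_congr rfl fun k _ => Finset.sum_congr rfl fun l _ => Finset.sum_comm

lemma F2_sq : ∀ x : F2, x ^ 2 = x := by decide

lemma act_Q (P A : Matrix (Fin 4) (Fin 4) F2) : act P (Q A) = Q (P.transpose * A * P) := by
  have hsq : ∀ j, (∑ l, P j l • (X l : MvPolynomial (Fin 4) F2)) ^ 2 = ∑ l, P j l • X l ^ 2 := by
    intro j
    haveI : Fact (Nat.Prime 2) := ⟨Nat.prime_two⟩
    rw [sum_pow_char 2]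
    refine Finset.sum_congr rfl fun l _ => ?_
    rw [smul_pow]
    congr 1
    exact F2_sq _
  have hL : act P (Q A) = ∑ i, ∑ j, ∑ k, ∑ l,
      (P i k * A i j * P j l) • ((X k : MvPolynomial (Fin 4) F2) * X l ^ 2) := by
    simp only [act, Q, map_sum, map_smul, map_mul, map_pow, aeval_X, hsq]
    refine Finset.sum_congr rfl fun i _ => Finset.sum_congr rfl fun j _ => ?_
    rw [Finset.sum_mul_sum, Finset.smul_sum]
    refine Finset.sum_congr rfl fun k _ => ?_
    rw [Finset.smul_sum]
    refine Finset.sum_congr rfl fun l _ => ?_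
    rw [smul_mul_smul_comm, smul_smul]
    congr 1
    ring
  rw [hL, sum4_comm]
  simp only [Q, Matrix.mul_apply, Matrix.transpose_apply, Finset.sum_mul, Finset.sum_smul]

/-- The alternating matrix with given upper triangular entries. -/
def alt (a b c d e h : F2) : Matrix (Fin 4) (Fin 4) F2 :=
  !![0, a, b, c; a, 0, d, e; b, d, 0, h; c, e, h, 0]

/-- Vectors indexed by `Fin 6`, standing for the pairs `{i, 5}`. -/
def bb : Fin 6 → Fin 4 → F2 :=
  ![![1, 0, 0, 0], ![0, 1, 0, 0], ![0, 0, 1, 0], ![0, 0, 0, 1], ![1, 1, 1, 1], ![0, 0, 0, 0]]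

/-- The matrix of a permutation. -/
def TT (s : Equiv.Perm (Fin 6)) : Matrix (Fin 4) (Fin 4) F2 :=
  Matrix.of fun k i => bb (s (Fin.castLE (by norm_num) i)) k + bb (s 5) k

lemma TT_bb (s : Equiv.Perm (Fin 6)) (j : Fin 6) :
    (TT s).mulVec (bb j) = bb (s j) + bb (s 5) := by
  have hsum : ∑ i, bb (s i) = 0 := by
    rw [Equiv.sum_comp s bb]; decide
  funext k
  have h1 := congrFun hsum k
  simp only [Fin.sum_univ_six, Pi.add_apply, Pi.zero_apply] at h1
  have h2 : ∀ x : F2, x + x = 0 := by decide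
  fin_cases j
  · simp [Matrix.mulVec, dotProduct, Fin.sum_univ_four, TT, bb]
  · simp [Matrix.mulVec, dotProduct, Fin.sum_univ_four, TT, bb]
  · simp [Matrix.mulVec, dotProduct, Fin.sum_univ_four, TT, bb]
  · simp [Matrix.mulVec, dotProduct, Fin.sum_univ_four, TT, bb]
  · have b4 : ∀ i, bb 4 i = 1 := by decide
    simp [Matrix.mulVec, dotProduct, Fin.sum_univ_four, TT, b4]
    have h3 : ∀ p q r u x y : F2, p + q + r + u + x + y = 0 →
      p + y + (q + y) + (r + y) + (u + y) = x + y := by decide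
    exact h3 _ _ _ _ _ _ h1
  · simp [Matrix.mulVec, dotProduct, Fin.sum_univ_four, TT, bb, h2]

lemma bb_castLE (i : Fin 4) : bb (Fin.castLE (by norm_num) i) = Pi.single i 1 := by
  revert i; decide

lemma TT_mul (s t : Equiv.Perm (Fin 6)) : TT (s * t) = TT s * TT t := by
  apply Matrix.toLin'.injective
  apply LinearMap.pi_ext'
  intro i
  apply LinearMap.ext_ring
  change (TT (s * t)).mulVec (Pi.single i 1) = (TT s * TT t).mulVec (Pi.single i 1)
  rw [← Matrix.mulVec_mulVec, ← bb_castLE, TT_bb, TT_bb, Matrix.mulVec_add, TT_bb, TT_bb]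
  have h2 : ∀ x y z : F2, x + y = x + z + (y + z) := by decide
  funext k
  exact h2 _ _ _

lemma TT_one : TT 1 = 1 := by decide

lemma TT_inj (s : Equiv.Perm (Fin 6)) (h : TT s = 1) : s = 1 := by
  have h1 : ∀ j, bb (s j) + bb (s 5) = bb j := by
    intro j
    rw [← TT_bb, h, Matrix.one_mulVec]
  have h2 : ∀ c : Fin 6, (∀ j, ∃ i, bb i + bb c = bb j) → c = 5 := by decide +kernel
  have h3 : s 5 = 5 := h2 _ fun j => ⟨s j, h1 j⟩
  have h4 : ∀ i j : Fin 6, bb i + bb 5 = bb j → i = j := by decide +kernel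
  ext j
  rw [h4 (s j) j (by rw [← h1 j, h3])]
  rfl

/-- The reference nondegenerate alternating matrix. -/
def MM : Matrix (Fin 4) (Fin 4) F2 := alt 1 1 1 1 1 1

lemma TT_MM (s : Equiv.Perm (Fin 6)) : (TT s).transpose * MM * TT s = MM := by
  have h1 : ∀ p q r : Fin 6, p ≠ q → r ≠ q →
      ∑ j, (∑ i, (bb p i + bb q i) * MM i j) * (bb r j + bb q j) = if p = r then 0 else 1 := by
    decide +kernel
  have h2 : ∀ i j : Fin 4, MM i j = if i = j then (0 : F2) else (1 : F2) := by
    intro i j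
    fin_cases i <;> fin_cases j <;> rfl
  have h5 : ∀ i : Fin 4, (Fin.castLE (by norm_num) i : Fin 6) ≠ 5 := by decide
  ext i j
  rw [h2]
  simp only [Matrix.mul_apply, Matrix.transpose_apply, TT, Matrix.of_apply]
  rw [h1]
  · simp [Fin.ext_iff]
  · intro h
    have := s.injective h
    exact h5 i this
  · intro h
    have := s.injective h
    exact h5 j this

/-- The representation of `S₆` on `𝔽₂⁴`. -/
def rho : Equiv.Perm (Fin 6) →* GL (Fin 4) F2 where
  toFun s := ⟨TT s, TT s⁻¹, by rw [← TT_mul, mul_inv_cancel, TT_one],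
    by rw [← TT_mul, inv_mul_cancel, TT_one]⟩
  map_one' := Units.ext TT_one
  map_mul' s t := Units.ext (TT_mul s t)

lemma rho_inj : Function.Injective rho := by
  rw [injective_iff_map_eq_one]
  intro s h
  exact TT_inj s (congrArg Units.val h)

/-- Base change given by four columns. -/
def cols (p q r u : Fin 4 → F2) : Matrix (Fin 4) (Fin 4) F2 :=
  (Matrix.of ![p, q, p + q + r, p + q + u]).transpose

/-- Symplectic Gram-Schmidt starting from the basis vectors `i`, `j` (paired to one), `k`, `l`. -/
def gs (A : Matrix (Fin 4) (Fin 4) F2) (i j k l : Fin 4) : Matrix (Fin 4) (Fin 4) F2 :=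
  cols (Pi.single i 1) (Pi.single j 1)
    (Pi.single k 1 + A k j • Pi.single i 1 + A k i • Pi.single j 1)
    (Pi.single l 1 + A l j • Pi.single i 1 + A l i • Pi.single j 1)

lemma alt_cases : ∀ a b c d e h : F2,
    (∃ v : Fin 4 → F2, v ≠ 0 ∧ (alt a b c d e h).mulVec v = 0) ∨
    ∃ R : Matrix (Fin 4) (Fin 4) F2, R.transpose * alt a b c d e h * R = MM := by
  have key : ∀ a b c d e h : F2,
    (∃ x y z t : F2, ![x, y, z, t] ≠ 0 ∧ (alt a b c d e h).mulVec ![x, y, z, t] = 0) ∨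
      (gs (alt a b c d e h) 0 1 2 3).transpose * alt a b c d e h *
        (gs (alt a b c d e h) 0 1 2 3) = MM ∨
      (gs (alt a b c d e h) 0 2 1 3).transpose * alt a b c d e h *
        (gs (alt a b c d e h) 0 2 1 3) = MM ∨
      (gs (alt a b c d e h) 0 3 1 2).transpose * alt a b c d e h *
        (gs (alt a b c d e h) 0 3 1 2) = MM := by
    decide +kernel
  intro a b c d e h
  rcases key a b c d e h with ⟨x, y, z, t, hv⟩ | hR | hR | hR
  · exact Or.inl ⟨_, hv⟩
  · exact Or.inr ⟨_, hR⟩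
  · exact Or.inr ⟨_, hR⟩
  · exact Or.inr ⟨_, hR⟩

lemma MM_det : MM.det = 1 := by
  have h : MM * MM = 1 := by decide +kernel
  have h2 := congrArg Matrix.det h
  rw [Matrix.det_mul, Matrix.det_one] at h2
  exact (by decide : ∀ x : F2, x * x = 1 → x = 1) _ h2

lemma backward_aux (f : MvPolynomial (Fin 4) F2) (A R : Matrix (Fin 4) (Fin 4) F2)
    (hf : f = Q A) (hR : R.transpose * A * R = MM) :
    ∃ H : Subgroup (GL (Fin 4) F2), H ≤ stab f ∧ Nonempty (H ≃* Equiv.Perm (Fin 6)) := by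
  have hdet : IsUnit R.det := by
    rw [isUnit_iff_ne_zero]
    intro h0
    have h := MM_det
    rw [← hR, Matrix.det_mul, h0, mul_zero] at h
    exact zero_ne_one h
  obtain ⟨r, hr⟩ := (Matrix.isUnit_iff_isUnit_det R).mpr hdet
  let ψ : Equiv.Perm (Fin 6) →* GL (Fin 4) F2 := (MulAut.conj r).toMonoidHom.comp rho
  have hψ : Function.Injective ψ := (MulAut.conj r).injective.comp rho_inj
  refine ⟨ψ.range, ?_, ⟨(MonoidHom.ofInjective hψ).symm⟩⟩
  rintro _ ⟨s, rfl⟩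
  have h1 : act (r : Matrix (Fin 4) (Fin 4) F2) f = Q MM := by
    rw [hf, act_Q, hr, hR]
  have h2 : act (TT s) (Q MM) = Q MM := by rw [act_Q, TT_MM]
  change act ((r * rho s * r⁻¹ : GL (Fin 4) F2) : Matrix (Fin 4) (Fin 4) F2) f = f
  rw [Units.val_mul, Units.val_mul, ← act_act, ← act_act, h1]
  change act _ (act (TT s) (Q MM)) = f
  rw [h2, ← h1, act_act, Units.mul_inv, act_one]

lemma singular (a b c d e h : F2) (v : Fin 4 → F2) (hv : v ≠ 0)
    (hA : (alt a b c d e h).mulVec v = 0) (hv0 : eval v (Q (alt a b c d e h)) = 0) :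
    ¬ IsSmoothCubic (Q (alt a b c d e h)) := by
  rintro ⟨-, hs⟩
  have hmap : ∀ p : MvPolynomial (Fin 4) F2,
      eval (fun i => algebraMap F2 Kbar (v i)) (map (algebraMap F2 Kbar) p) =
        algebraMap F2 Kbar (eval v p) := by
    intro p
    rw [eval_map, eval₂_comp]
    rfl
  have h0 := hs (fun i => algebraMap F2 Kbar (v i)) (by rw [hmap, hv0, map_zero]) (by
    intro i
    rw [hmap]
    have hi := congrFun hA i
    have hsq : ∀ x : F2, x ^ 2 = x := by decide
    have h2 : (2 : F2) = 0 := by decide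
    suffices hh : eval v (pderiv i (Q (alt a b c d e h))) = 0 by rw [hh, map_zero]
    rw [Pi.zero_apply] at hi
    rw [← hi]
    fin_cases i <;>
      simp [Q, alt, Fin.sum_univ_four, Matrix.mulVec, dotProduct, pderiv_X, Pi.single_apply,
        hsq, h2])
  apply hv
  funext i
  have := congrFun h0 i
  simpa using this

lemma expand (f : MvPolynomial (Fin 4) F2) (hf : f.IsHomogeneous 3) :
    f = ∑ k ∈ Finset.Nat.antidiagonalTuple 4 3,
      coeff (Finsupp.equivFunOnFinite.symm k) f • ∏ i, X i ^ k i := by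
  have h1 : ∀ k : Fin 4 → ℕ, (∏ i, X i ^ k i : MvPolynomial (Fin 4) F2) =
      monomial (Finsupp.equivFunOnFinite.symm k) 1 := by
    intro k
    rw [monomial_eq, Finsupp.prod_fintype _ _ (by simp)]
    simp
  ext m
  rw [coeff_sum]
  simp only [h1, coeff_smul, coeff_monomial]
  by_cases hm : m.degree = 3
  · rw [Finset.sum_eq_single (m : Fin 4 → ℕ)]
    · simp
    · intro k _ hk
      rw [if_neg, smul_zero]
      rintro rfl
      exact hk (by simp)
    · intro hk
      exfalso
      apply hk
      rw [Finset.Nat.mem_antidiagonalTuple, ← hm, Finsupp.degree_eq_sum]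
  · rw [hf.coeff_eq_zero hm, Finset.sum_eq_zero]
    intro k hk
    rw [if_neg, smul_zero]
    rintro rfl
    apply hm
    rw [Finset.Nat.mem_antidiagonalTuple] at hk
    rw [← hk, Finsupp.degree_eq_sum]
    simp

lemma eq_Q (f : MvPolynomial (Fin 4) F2) (hf : f.IsHomogeneous 3)
    (hv : ∀ v : Fin 4 → F2, eval v f = 0) : ∃ a b c d e h : F2, f = Q (alt a b c d e h) := by
  have h1 := expand f hf
  obtain ⟨g, hg⟩ : ∃ g : (Fin 4 → ℕ) → F2,
      ∀ k, coeff (Finsupp.equivFunOnFinite.symm k) f = g k := ⟨_, fun _ => rfl⟩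
  simp only [hg] at h1
  have hT : List.Nat.antidiagonalTuple 4 3 =
     [![0, 0, 0, 3],
      ![0, 0, 1, 2],
      ![0, 0, 2, 1],
      ![0, 0, 3, 0],
      ![0, 1, 0, 2],
      ![0, 1, 1, 1],
      ![0, 1, 2, 0],
      ![0, 2, 0, 1],
      ![0, 2, 1, 0],
      ![0, 3, 0, 0],
      ![1, 0, 0, 2],
      ![1, 0, 1, 1],
      ![1, 0, 2, 0],
      ![1, 1, 0, 1],
      ![1, 1, 1, 0],
      ![1, 2, 0, 0],
      ![2, 0, 0, 1],
      ![2, 0, 1, 0],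
      ![2, 1, 0, 0],
      ![3, 0, 0, 0]] := by
    decide +kernel
  have hS : ∀ F : (Fin 4 → ℕ) → MvPolynomial (Fin 4) F2,
      ∑ k ∈ Finset.Nat.antidiagonalTuple 4 3, F k =
        ((List.Nat.antidiagonalTuple 4 3).map F).sum := fun _ => rfl
  rw [hS, hT] at h1
  simp only [List.map_cons, List.map_nil, List.sum_cons, List.sum_nil, Fin.prod_univ_four] at h1
  simp at h1
  have e0 := hv ![1, 0, 0, 0]
  have e1 := hv ![0, 1, 0, 0]
  have e2 := hv ![0, 0, 1, 0]
  have e3 := hv ![0, 0, 0, 1]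
  have e01 := hv ![1, 1, 0, 0]
  have e02 := hv ![1, 0, 1, 0]
  have e03 := hv ![1, 0, 0, 1]
  have e12 := hv ![0, 1, 1, 0]
  have e13 := hv ![0, 1, 0, 1]
  have e23 := hv ![0, 0, 1, 1]
  have e012 := hv ![1, 1, 1, 0]
  have e013 := hv ![1, 1, 0, 1]
  have e023 := hv ![1, 0, 1, 1]
  have e123 := hv ![0, 1, 1, 1]
  rw [h1] at e0 e1 e2 e3 e01 e02 e03 e12 e13 e23 e012 e013 e023 e123
  simp [smul_eval] at e0 e1 e2 e3
  simp [smul_eval, e0, e1, e2, e3] at e01 e02 e03 e12 e13 e23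
  have hadd : ∀ x y : F2, x + y = 0 → x = y := by decide
  replace e01 := hadd _ _ e01
  replace e02 := hadd _ _ e02
  replace e03 := hadd _ _ e03
  replace e12 := hadd _ _ e12
  replace e13 := hadd _ _ e13
  replace e23 := hadd _ _ e23
  simp [smul_eval, e0, e1, e2, e3, e01, e02, e03, e12, e13, e23] at e012 e013 e023 e123
  have h3 : ∀ x y z t : F2, x + (x + (y + (t + (z + (y + z))))) = 0 → t = 0 := by decide
  replace e012 := h3 _ _ _ _ e012
  replace e013 := h3 _ _ _ _ e013
  replace e023 := h3 _ _ _ _ e023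
  replace e123 := h3 _ _ _ _ e123
  refine ⟨g ![2, 1, 0, 0], g ![2, 0, 1, 0], g ![2, 0, 0, 1], g ![0, 2, 1, 0], g ![0, 2, 0, 1],
    g ![0, 0, 2, 1], ?_⟩
  rw [h1, e0, e1, e2, e3, e01, e02, e03, e12, e13, e23, e012, e013, e023, e123]
  simp [Q, alt, Fin.sum_univ_four, smul_eq_C_mul]
  ring

/-- the stabilizer of a smooth cubic form `f` over `𝔽₂` contains a subgroup
isomorphic to `S₆` if and only if `f` vanishes at every point of `𝔽₂⁴`. -/
theorem S6_action_iff_vanishing (f : MvPolynomial (Fin 4) F2) (hf : IsSmoothCubic f) :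
    (∃ H : Subgroup (GL (Fin 4) F2), H ≤ stab f ∧
      Nonempty (H ≃* Equiv.Perm (Fin 6))) ↔
    (∀ v : Fin 4 → F2, eval v f = 0) := by
  constructor
  · rintro ⟨H, hH, ⟨φ⟩⟩
    exact forward f hf.1 H hH φ
  · intro hv
    obtain ⟨a, b, c, d, e, h, hQ⟩ := eq_Q f hf.1 hv
    rcases alt_cases a b c d e h with ⟨v, hv0, hA⟩ | ⟨R, hR⟩
    · exact absurd (hQ ▸ hf) (singular a b c d e h v hv0 hA (hQ ▸ hv v))
    · exact backward_aux f _ R hQ hR
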